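/- Interchange lemma: let μ0 < μ1 < μ2 be stable matchings where μ1 covers μ0 and μ2 covers μ1, with rotations ρ0, ρ1 such that μ1 is the elimination of ρ0 from μ0 and μ2 is the elimination of ρ1 from μ1. If ρ0 is not a (type 1 or type 2) predecessor of ρ1, then ρ1 is exposed in μ0; moreover, letting μ1' be the elimination of ρ1 from μ0, the rotation ρ0 is exposed in μ1' and μ2 is the elimination of ρ0 from μ1'. -/

import Mathlib

/-- A matching market: men `M` and women `W`; each man has a strict preference
order over `W ∪ {∅}` and each woman over `M ∪ {∅}`, encoded by injective rank
functions (a strictly higher rank means strictly more preferred); `none`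
plays the role of `∅` (being unmatched), and partners ranked below `none`
are unacceptable. -/
structure Market (M W : Type*) where
  mRank : M → Option W → ℕ
  wRank : W → Option M → ℕ
  mRank_inj : ∀ m, Function.Injective (mRank m)
  wRank_inj : ∀ w, Function.Injective (wRank w)

/-- A matching: `mu` assigns each man a woman or `none`, `nu` assigns each
woman a man or `none`, and `μ(m) = w ↔ μ(w) = m`. -/
structure Matching (M W : Type*) where
  mu : M → Option W
  nu : W → Option M
  consistent : ∀ m w, mu m = some w ↔ nu w = some m

variable {M W : Type*}

/-- Every matched agent prefers their partner to `∅`. -/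
def Market.IndivRational (mkt : Market M W) (μ : Matching M W) : Prop :=
  (∀ m w, μ.mu m = some w → mkt.mRank m none < mkt.mRank m (some w)) ∧
  (∀ w m, μ.nu w = some m → mkt.wRank w none < mkt.wRank w (some m))

/-- `(m, w)` is a blocking pair for `μ`: they are not matched to each other,
`w ≻_m μ(m)` and `m ≻_w μ(w)`. -/
def Market.Blocking (mkt : Market M W) (μ : Matching M W) (m : M) (w : W) : Prop :=
  μ.mu m ≠ some w ∧
  mkt.mRank m (μ.mu m) < mkt.mRank m (some w) ∧
  mkt.wRank w (μ.nu w) < mkt.wRank w (some m)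

/-- A matching is stable if it is individually rational and has no blocking pair. -/
def Market.Stable (mkt : Market M W) (μ : Matching M W) : Prop :=
  mkt.IndivRational μ ∧ ∀ m w, ¬ mkt.Blocking μ m w

/-- Woman-dominance: `μ ≥ μ'` iff every woman weakly prefers her partner in `μ`. -/
def Market.Dom (mkt : Market M W) (μ μ' : Matching M W) : Prop :=
  ∀ w, mkt.wRank w (μ'.nu w) ≤ mkt.wRank w (μ.nu w)

/-- Strict woman-dominance: `μ > μ'`. -/
def Market.StrictDom (mkt : Market M W) (μ μ' : Matching M W) : Prop :=
  mkt.Dom μ μ' ∧ μ ≠ μ'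

/-- `μ'` covers `μ` in the woman-dominance order on stable matchings. -/
def Market.Covers (mkt : Market M W) (μ' μ : Matching M W) : Prop :=
  mkt.StrictDom μ' μ ∧
  ¬ ∃ μ'' : Matching M W, mkt.Stable μ'' ∧ mkt.StrictDom μ' μ'' ∧ mkt.StrictDom μ'' μ

/-- `μ'` is the elimination of the list `ρ = [(w_0,m_0),…,(w_{k-1},m_{k-1})]`
from `μ`: `k ≥ 2`, the women (resp. men) in `ρ` are distinct, `μ(w_i) = m_i`,
`μ'(m_i) = w_{(i+1) mod k}`, and every agent not appearing in `ρ` has the same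
partner in `μ` and `μ'`. -/
def Matching.IsElimOf (μ' μ : Matching M W) (ρ : List (W × M)) : Prop :=
  2 ≤ ρ.length ∧
  (ρ.map Prod.fst).Nodup ∧ (ρ.map Prod.snd).Nodup ∧
  (∀ i : Fin ρ.length, μ.nu (ρ.get i).1 = some (ρ.get i).2) ∧
  (∀ i : Fin ρ.length, μ'.mu (ρ.get i).2 =
    some (ρ.get ⟨(i.1 + 1) % ρ.length,
      Nat.mod_lt _ (Nat.lt_of_le_of_lt (Nat.zero_le _) i.isLt)⟩).1) ∧
  (∀ m : M, m ∉ ρ.map Prod.snd → μ'.mu m = μ.mu m) ∧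
  (∀ w : W, w ∉ ρ.map Prod.fst → μ'.nu w = μ.nu w)

/-- `ρ` is a rotation exposed in `μ`: the elimination of `ρ` from `μ` is a
stable matching which covers `μ`. -/
def Market.ExposedRotation (mkt : Market M W) (μ : Matching M W) (ρ : List (W × M)) : Prop :=
  ∃ μ' : Matching M W, Matching.IsElimOf μ' μ ρ ∧ mkt.Stable μ' ∧ mkt.Covers μ' μ

/-- `ρ` belongs to the set `Π` of all rotations, i.e. it is exposed in some
stable matching. -/
def Market.InPi (mkt : Market M W) (ρ : List (W × M)) : Prop :=
  ∃ μ : Matching M W, mkt.Stable μ ∧ mkt.ExposedRotation μ ρ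

/-- The cyclically next index in a rotation. -/
def RotNext (ρ : List (W × M)) (i : Fin ρ.length) : Fin ρ.length :=
  ⟨(i.1 + 1) % ρ.length, Nat.mod_lt _ (Nat.lt_of_le_of_lt (Nat.zero_le _) i.isLt)⟩

/-- The cyclically previous index in a rotation. -/
def RotPrev (ρ : List (W × M)) (i : Fin ρ.length) : Fin ρ.length :=
  ⟨(i.1 + ρ.length - 1) % ρ.length, Nat.mod_lt _ (Nat.lt_of_le_of_lt (Nat.zero_le _) i.isLt)⟩

/-- `ρ` moves man `m` from `w` to `w'` (i.e. `m = m_i`, `w = w_i`, `w' = w_{i+1}`). -/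
def MovesManFromTo (ρ : List (W × M)) (m : M) (w w' : W) : Prop :=
  ∃ i : Fin ρ.length, (ρ.get i).2 = m ∧ (ρ.get i).1 = w ∧ (ρ.get (RotNext ρ i)).1 = w'

/-- `ρ` moves woman `w` from `m` to `m'` (i.e. `w = w_i`, `m = m_i`, `m' = m_{i-1}`). -/
def MovesWomanFromTo (ρ : List (W × M)) (w : W) (m m' : M) : Prop :=
  ∃ i : Fin ρ.length, (ρ.get i).1 = w ∧ (ρ.get i).2 = m ∧ (ρ.get (RotPrev ρ i)).2 = m'

/-- `ρ1` is a type 1 predecessor of `ρ2`: `ρ1` moves some man `m` to a woman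
`w` and the pair `(w, m)` appears in `ρ2`. -/
def Market.Type1Pred (_mkt : Market M W) (ρ1 ρ2 : List (W × M)) : Prop :=
  ∃ (w : W) (m : M), (∃ w0 : W, MovesManFromTo ρ1 m w0 w) ∧ (w, m) ∈ ρ2

/-- `ρ1` is a type 2 predecessor of `ρ2`: `ρ1` moves some woman `w` from a man
strictly below `m` to a man strictly above `m`, and `ρ2` moves `m` from a woman
strictly above `w` to a woman strictly below `w`. -/
def Market.Type2Pred (mkt : Market M W) (ρ1 ρ2 : List (W × M)) : Prop :=
  ∃ (m : M) (w : W) (mlo mhi : M) (whi wlo : W),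
    MovesWomanFromTo ρ1 w mlo mhi ∧
    mkt.wRank w (some mlo) < mkt.wRank w (some m) ∧
    mkt.wRank w (some m) < mkt.wRank w (some mhi) ∧
    MovesManFromTo ρ2 m whi wlo ∧
    mkt.mRank m (some wlo) < mkt.mRank m (some w) ∧
    mkt.mRank m (some w) < mkt.mRank m (some whi)

/-- `ρ1` is a (type 1 or type 2) predecessor of `ρ2`; these are the edges of
the predecessor graph `G(Π)`. -/
def Market.Pred (mkt : Market M W) (ρ1 ρ2 : List (W × M)) : Prop :=
  mkt.Type1Pred ρ1 ρ2 ∨ mkt.Type2Pred ρ1 ρ2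

/-- `σ` assigns each woman the more preferred of her partners in `μ` and `μ'`. -/
def Market.IsJoin (mkt : Market M W) (μ μ' σ : Matching M W) : Prop :=
  ∀ w, σ.nu w = if mkt.wRank w (μ'.nu w) ≤ mkt.wRank w (μ.nu w) then μ.nu w else μ'.nu w

/-- `σ` assigns each woman the less preferred of her partners in `μ` and `μ'`. -/
def Market.IsMeet (mkt : Market M W) (μ μ' σ : Matching M W) : Prop :=
  ∀ w, σ.nu w = if mkt.wRank w (μ.nu w) ≤ mkt.wRank w (μ'.nu w) then μ.nu w else μ'.nu w

/-!
Since `ρ0` is not a type 1 predecessor of `ρ1`, no agent takes part in both rotations, so the two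
eliminations commute as operations on matchings: there is a matching `ν` which is the elimination
of `ρ1` from `μ0` and from which eliminating `ρ0` gives `μ2`. A pair blocking `ν` must consist of
a man moved by `ρ1` and a woman moved by `ρ0`, and such a pair witnesses that `ρ0` is a type 2
predecessor of `ρ1`; so `ν` is stable.

The covering relations come from a locality principle: for stable matchings, whether `μ'` covers
`μ` depends only on the rotation that leads from `μ` to `μ'`. Indeed, a stable matching strictly between `μ` and `μ'`
differs from them on the agents of the rotation only, and its restriction to these agents can be
spliced into any other stable matching from which the elimination of the rotation is stable.
-/

attribute [ext] Matching

namespace Matching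

variable {μ ν ξ : Matching M W} {C D : Set (M ⊕ W)}

/-- `μ` and `ν` give the same partner to each agent in the set `C`. Sets of agents are encoded as
subsets of `M ⊕ W`, so that they have complements and can be compared. -/
structure AgreesOn (μ ν : Matching M W) (C : Set (M ⊕ W)) : Prop where
  mu : ∀ ⦃m⦄, Sum.inl m ∈ C → μ.mu m = ν.mu m
  nu : ∀ ⦃w⦄, Sum.inr w ∈ C → μ.nu w = ν.nu w

namespace AgreesOn

theorem symm (h : μ.AgreesOn ν C) : ν.AgreesOn μ C :=
  ⟨fun _ hm => (h.mu hm).symm, fun _ hw => (h.nu hw).symm⟩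

theorem trans (h : μ.AgreesOn ν C) (h' : ν.AgreesOn ξ C) : μ.AgreesOn ξ C :=
  ⟨fun _ hm => (h.mu hm).trans (h'.mu hm), fun _ hw => (h.nu hw).trans (h'.nu hw)⟩

theorem mono (h : μ.AgreesOn ν C) (hDC : D ⊆ C) : μ.AgreesOn ν D :=
  ⟨fun _ hm => h.mu (hDC hm), fun _ hw => h.nu (hDC hw)⟩

theorem union (hC : μ.AgreesOn ν C) (hD : μ.AgreesOn ν D) : μ.AgreesOn ν (C ∪ D) :=
  ⟨fun _ hm => hm.elim (hC.mu ·) (hD.mu ·), fun _ hw => hw.elim (hC.nu ·) (hD.nu ·)⟩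

theorem eq_of_compl (h : μ.AgreesOn ν C) (h' : μ.AgreesOn ν Cᶜ) : μ = ν := by
  have huniv : μ.AgreesOn ν Set.univ := Set.union_compl_self C ▸ h.union h'
  exact Matching.ext (funext fun _ => huniv.mu trivial) (funext fun _ => huniv.nu trivial)

end AgreesOn

/-- No pair matched by `μ` has one member in the set of agents `C` and the other outside it. This
is what allows `μ` to be cut along `C` and glued to another matching. -/
def Closed (μ : Matching M W) (C : Set (M ⊕ W)) : Prop :=
  ∀ ⦃m w⦄, μ.mu m = some w → (Sum.inl m ∈ C ↔ Sum.inr w ∈ C)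

theorem closed_compl : μ.Closed Cᶜ ↔ μ.Closed C := by
  simp only [Closed, Set.mem_compl_iff, not_iff_not]

theorem Closed.congr (hν : ν.Closed C) (h : μ.AgreesOn ν C) : μ.Closed C := by
  intro m w hmw
  constructor
  · intro hm
    exact (hν (h.mu hm ▸ hmw)).1 hm
  · intro hw
    have hνw : ν.nu w = some m := h.nu hw ▸ (μ.consistent m w).1 hmw
    exact (hν ((ν.consistent m w).2 hνw)).2 hw

theorem Closed.congr_compl (hν : ν.Closed C) (h : μ.AgreesOn ν Cᶜ) : μ.Closed C :=
  closed_compl.1 ((closed_compl.2 hν).congr h)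

open Classical in
/-- The matching that follows `μ` on the set of agents `C` and `ν` outside `C`. -/
noncomputable def splice (hμ : μ.Closed C) (hν : ν.Closed C) : Matching M W where
  mu m := if Sum.inl m ∈ C then μ.mu m else ν.mu m
  nu w := if Sum.inr w ∈ C then μ.nu w else ν.nu w
  consistent m w := by
    have hμ_iff := μ.consistent m w
    have hν_iff := ν.consistent m w
    have hμ_mem := @hμ m w
    have hν_mem := @hν m w
    split_ifs <;> grind

theorem splice_agreesOn (hμ : μ.Closed C) (hν : ν.Closed C) : (splice hμ hν).AgreesOn μ C :=
  ⟨fun _ hm => if_pos hm, fun _ hw => if_pos hw⟩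

theorem splice_agreesOn_compl (hμ : μ.Closed C) (hν : ν.Closed C) :
    (splice hμ hν).AgreesOn ν Cᶜ :=
  ⟨fun _ hm => if_neg hm, fun _ hw => if_neg hw⟩

end Matching

/-- The set of agents taking part in the rotation `ρ`, men on the left and women on the right. -/
def rotAgents (ρ : List (W × M)) : Set (M ⊕ W) :=
  {a | Sum.elim (· ∈ ρ.map Prod.snd) (· ∈ ρ.map Prod.fst) a}

section Rotation

variable {ρ : List (W × M)} {m m' : M} {w w' : W}

theorem inl_get_mem_rotAgents (i : Fin ρ.length) : Sum.inl (ρ.get i).2 ∈ rotAgents ρ :=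
  List.mem_map_of_mem (List.get_mem ρ i)

theorem inr_get_mem_rotAgents (i : Fin ρ.length) : Sum.inr (ρ.get i).1 ∈ rotAgents ρ :=
  List.mem_map_of_mem (List.get_mem ρ i)

theorem exists_movesManFromTo (hm : Sum.inl m ∈ rotAgents ρ) :
    ∃ w w', MovesManFromTo ρ m w w' := by
  obtain ⟨p, hp, rfl⟩ := List.mem_map.1 hm
  obtain ⟨i, rfl⟩ := List.get_of_mem hp
  exact ⟨_, _, i, rfl, rfl, rfl⟩

theorem exists_movesWomanFromTo (hw : Sum.inr w ∈ rotAgents ρ) :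
    ∃ m m', MovesWomanFromTo ρ w m m' := by
  obtain ⟨p, hp, rfl⟩ := List.mem_map.1 hw
  obtain ⟨i, rfl⟩ := List.get_of_mem hp
  exact ⟨_, _, i, rfl, rfl, rfl⟩

theorem MovesManFromTo.mem (h : MovesManFromTo ρ m w w') : (w, m) ∈ ρ := by
  obtain ⟨i, rfl, rfl, -⟩ := h
  exact List.get_mem ρ i

theorem MovesManFromTo.source_mem_rotAgents (h : MovesManFromTo ρ m w w') :
    Sum.inr w ∈ rotAgents ρ := by
  obtain ⟨i, -, rfl, -⟩ := h
  exact inr_get_mem_rotAgents i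

theorem MovesWomanFromTo.source_mem_rotAgents (h : MovesWomanFromTo ρ w m m') :
    Sum.inl m ∈ rotAgents ρ := by
  obtain ⟨i, -, rfl, -⟩ := h
  exact inl_get_mem_rotAgents i

theorem MovesWomanFromTo.target_mem_rotAgents (h : MovesWomanFromTo ρ w m m') :
    Sum.inl m' ∈ rotAgents ρ := by
  obtain ⟨i, -, -, rfl⟩ := h
  exact inl_get_mem_rotAgents _

theorem rotNext_rotPrev (ρ : List (W × M)) (i : Fin ρ.length) :
    RotNext ρ (RotPrev ρ i) = i := by
  have hadd : i.1 + ρ.length - 1 + 1 = i.1 + ρ.length := by lia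
  apply Fin.ext
  simp only [RotNext, RotPrev, Nat.mod_add_mod, hadd, Nat.add_mod_right, Nat.mod_eq_of_lt i.2]

end Rotation

namespace Matching.IsElimOf

variable {μ μ' ν ν' : Matching M W} {ρ : List (W × M)} {m m' : M} {w w' : W}

theorem mu_of_moves (h : IsElimOf μ' μ ρ) (hm : MovesManFromTo ρ m w w') :
    μ.mu m = some w ∧ μ'.mu m = some w' := by
  obtain ⟨-, -, -, hμ, hμ', -, -⟩ := h
  obtain ⟨i, rfl, rfl, rfl⟩ := hm
  exact ⟨(μ.consistent _ _).2 (hμ i), hμ' i⟩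

theorem nu_of_moves (h : IsElimOf μ' μ ρ) (hw : MovesWomanFromTo ρ w m m') :
    μ.nu w = some m ∧ μ'.nu w = some m' := by
  obtain ⟨-, -, -, hμ, hμ', -, -⟩ := h
  obtain ⟨i, rfl, rfl, rfl⟩ := hw
  have hprev : μ'.mu (ρ.get (RotPrev ρ i)).2 = some (ρ.get (RotNext ρ (RotPrev ρ i))).1 :=
    hμ' (RotPrev ρ i)
  rw [rotNext_rotPrev] at hprev
  exact ⟨hμ i, (μ'.consistent _ _).1 hprev⟩

theorem agreesOn_compl (h : IsElimOf μ' μ ρ) : μ'.AgreesOn μ (rotAgents ρ)ᶜ :=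
  ⟨fun m hm => h.2.2.2.2.2.1 m hm, fun w hw => h.2.2.2.2.2.2 w hw⟩

theorem agreesOn_source (h : IsElimOf μ' μ ρ) (h' : IsElimOf ν' ν ρ) :
    μ.AgreesOn ν (rotAgents ρ) where
  mu m hm := by
    obtain ⟨w, w', hmove⟩ := exists_movesManFromTo hm
    rw [(h.mu_of_moves hmove).1, (h'.mu_of_moves hmove).1]
  nu w hw := by
    obtain ⟨m, m', hmove⟩ := exists_movesWomanFromTo hw
    rw [(h.nu_of_moves hmove).1, (h'.nu_of_moves hmove).1]

theorem agreesOn_target (h : IsElimOf μ' μ ρ) (h' : IsElimOf ν' ν ρ) :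
    μ'.AgreesOn ν' (rotAgents ρ) where
  mu m hm := by
    obtain ⟨w, w', hmove⟩ := exists_movesManFromTo hm
    rw [(h.mu_of_moves hmove).2, (h'.mu_of_moves hmove).2]
  nu w hw := by
    obtain ⟨m, m', hmove⟩ := exists_movesWomanFromTo hw
    rw [(h.nu_of_moves hmove).2, (h'.nu_of_moves hmove).2]

theorem unique (h : IsElimOf μ' μ ρ) (h' : IsElimOf ν' μ ρ) : μ' = ν' :=
  (h.agreesOn_target h').eq_of_compl (h.agreesOn_compl.trans h'.agreesOn_compl.symm)

theorem congr (h : IsElimOf μ' μ ρ) (hν : ν.AgreesOn μ (rotAgents ρ))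
    (hν' : ν'.AgreesOn μ' (rotAgents ρ)) (hcompl : ν'.AgreesOn ν (rotAgents ρ)ᶜ) :
    IsElimOf ν' ν ρ := by
  obtain ⟨hlen, hwomen, hmen, hμ, hμ', -, -⟩ := h
  exact ⟨hlen, hwomen, hmen,
    fun i => (hν.nu (inr_get_mem_rotAgents i)).trans (hμ i),
    fun i => (hν'.mu (inl_get_mem_rotAgents i)).trans (hμ' i),
    fun _ hm => hcompl.mu hm, fun _ hw => hcompl.nu hw⟩

theorem closed_source (h : IsElimOf μ' μ ρ) : μ.Closed (rotAgents ρ) := by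
  intro m w hmw
  constructor
  · intro hm
    obtain ⟨w₁, w₂, hmove⟩ := exists_movesManFromTo hm
    obtain rfl : w = w₁ := Option.some.inj (hmw.symm.trans (h.mu_of_moves hmove).1)
    exact hmove.source_mem_rotAgents
  · intro hw
    obtain ⟨m₁, m₂, hmove⟩ := exists_movesWomanFromTo hw
    obtain rfl : m = m₁ :=
      Option.some.inj (((μ.consistent m w).1 hmw).symm.trans (h.nu_of_moves hmove).1)
    exact hmove.source_mem_rotAgents

theorem closed_target (h : IsElimOf μ' μ ρ) : μ'.Closed (rotAgents ρ) :=
  h.closed_source.congr_compl h.agreesOn_compl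

variable {μ₀ μ₁ μ₂ : Matching M W} {ρ₀ ρ₁ : List (W × M)}

theorem exists_comm (h₀ : IsElimOf μ₁ μ₀ ρ₀) (h₁ : IsElimOf μ₂ μ₁ ρ₁)
    (hdisj : Disjoint (rotAgents ρ₀) (rotAgents ρ₁)) :
    ∃ ν, IsElimOf ν μ₀ ρ₁ ∧ IsElimOf μ₂ ν ρ₀ := by
  have hμ₁₀ : μ₁.AgreesOn μ₀ (rotAgents ρ₁) := h₀.agreesOn_compl.mono hdisj.subset_compl_left
  have hμ₂₁ : μ₂.AgreesOn μ₁ (rotAgents ρ₀) := h₁.agreesOn_compl.mono hdisj.subset_compl_right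
  have hμ₀ : μ₀.Closed (rotAgents ρ₁) := h₁.closed_source.congr hμ₁₀.symm
  have hν := splice_agreesOn h₁.closed_target hμ₀
  have hν_compl := splice_agreesOn_compl h₁.closed_target hμ₀
  have hμ₂_compl : μ₂.AgreesOn (splice h₁.closed_target hμ₀) (rotAgents ρ₀)ᶜ := by
    have hneither : μ₂.AgreesOn (splice h₁.closed_target hμ₀)
        ((rotAgents ρ₀)ᶜ ∩ (rotAgents ρ₁)ᶜ) :=
      ((h₁.agreesOn_compl.mono Set.inter_subset_right).trans
        (h₀.agreesOn_compl.mono Set.inter_subset_left)).trans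
        (hν_compl.symm.mono Set.inter_subset_right)
    refine (hν.symm.union hneither).mono fun a ha => ?_
    exact (em (a ∈ rotAgents ρ₁)).imp id (⟨ha, ·⟩)
  exact ⟨_, h₁.congr hμ₁₀.symm hν hν_compl,
    h₀.congr (hν_compl.mono hdisj.subset_compl_right) hμ₂₁ hμ₂_compl⟩

end Matching.IsElimOf

namespace Market

open Matching

variable {mkt : Market M W} {μ ν ξ μ' ν' : Matching M W} {C : Set (M ⊕ W)} {m : M} {w : W}

theorem blocking_iff : mkt.Blocking μ m w ↔
    mkt.mRank m (μ.mu m) < mkt.mRank m (some w) ∧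
      mkt.wRank w (μ.nu w) < mkt.wRank w (some m) :=
  and_iff_right_of_imp fun h hmw => (hmw ▸ h.1).false

theorem Stable.not_blocking_of_le (hμ : mkt.Stable μ)
    (hm : mkt.mRank m (μ.mu m) ≤ mkt.mRank m (ν.mu m))
    (hw : mkt.wRank w (μ.nu w) ≤ mkt.wRank w (ν.nu w)) : ¬ mkt.Blocking ν m w := by
  rw [blocking_iff]
  rintro ⟨hm_lt, hw_lt⟩
  exact hμ.2 m w (blocking_iff.2 ⟨hm.trans_lt hm_lt, hw.trans_lt hw_lt⟩)

theorem Stable.wRank_le_of_mRank_lt (hμ : mkt.Stable μ)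
    (h : mkt.mRank m (μ.mu m) < mkt.mRank m (some w)) :
    mkt.wRank w (some m) ≤ mkt.wRank w (μ.nu w) :=
  not_lt.1 fun hw => hμ.2 m w (blocking_iff.2 ⟨h, hw⟩)

theorem Stable.mRank_le_of_wRank_lt (hμ : mkt.Stable μ)
    (h : mkt.wRank w (μ.nu w) < mkt.wRank w (some m)) :
    mkt.mRank m (some w) ≤ mkt.mRank m (μ.mu m) :=
  not_lt.1 fun hm => hμ.2 m w (blocking_iff.2 ⟨hm, h⟩)

theorem Stable.of_agreesOn (hμ : mkt.Stable μ) (hν : mkt.Stable ν)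
    (hξμ : ξ.AgreesOn μ C) (hξν : ξ.AgreesOn ν Cᶜ)
    (hout : ∀ m w, Sum.inl m ∈ C → Sum.inr w ∉ C → ¬ mkt.Blocking ξ m w)
    (hin : ∀ m w, Sum.inl m ∉ C → Sum.inr w ∈ C → ¬ mkt.Blocking ξ m w) :
    mkt.Stable ξ := by
  refine ⟨⟨fun m w hmw => ?_, fun w m hwm => ?_⟩, fun m w => ?_⟩
  · by_cases hm : Sum.inl m ∈ C
    · exact hμ.1.1 m w (hξμ.mu hm ▸ hmw)
    · exact hν.1.1 m w (hξν.mu hm ▸ hmw)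
  · by_cases hw : Sum.inr w ∈ C
    · exact hμ.1.2 w m (hξμ.nu hw ▸ hwm)
    · exact hν.1.2 w m (hξν.nu hw ▸ hwm)
  · by_cases hm : Sum.inl m ∈ C <;> by_cases hw : Sum.inr w ∈ C
    · exact hμ.not_blocking_of_le (by rw [hξμ.mu hm]) (by rw [hξμ.nu hw])
    · exact hout m w hm hw
    · exact hin m w hm hw
    · exact hν.not_blocking_of_le (by rw [hξν.mu hm]) (by rw [hξν.nu hw])

theorem Dom.trans (h : mkt.Dom ξ ν) (h' : mkt.Dom ν μ) : mkt.Dom ξ μ :=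
  fun w => (h' w).trans (h w)

theorem Stable.mRank_le_of_dom (hμ : mkt.Stable μ) (h : mkt.Dom ν μ) (m : M) :
    mkt.mRank m (ν.mu m) ≤ mkt.mRank m (μ.mu m) := by
  cases hν : ν.mu m with
  | none =>
    cases hmw : μ.mu m with
    | none => exact le_rfl
    | some w => exact (hμ.1.1 m w hmw).le
  | some w =>
    have hw : mkt.wRank w (μ.nu w) ≤ mkt.wRank w (some m) :=
      (ν.consistent m w).1 hν ▸ h w
    rcases hw.eq_or_lt with heq | hlt
    · rw [(μ.consistent m w).2 (mkt.wRank_inj w heq)]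
    · exact hμ.mRank_le_of_wRank_lt hlt

theorem Stable.agreesOn_of_dom_of_dom (hμ : mkt.Stable μ) (hν : mkt.Stable ν)
    (hνμ : mkt.Dom ν μ) (hξν : mkt.Dom ξ ν) (h : ξ.AgreesOn μ C) : ν.AgreesOn μ C where
  mu m hm := mkt.mRank_inj m <|
    (hμ.mRank_le_of_dom hνμ m).antisymm (h.mu hm ▸ hν.mRank_le_of_dom hξν m)
  nu w hw := mkt.wRank_inj w <| (h.nu hw ▸ hξν w).antisymm (hνμ w)

theorem StrictDom.congr (h : mkt.StrictDom ν μ) (hcompl : ν.AgreesOn μ Cᶜ)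
    (hν : ν'.AgreesOn ν C) (hμ : μ'.AgreesOn μ C) (hcompl' : ν'.AgreesOn μ' Cᶜ) :
    mkt.StrictDom ν' μ' := by
  refine ⟨fun w => ?_, ?_⟩
  · by_cases hw : Sum.inr w ∈ C
    · rw [hν.nu hw, hμ.nu hw]
      exact h.1 w
    · rw [hcompl'.nu hw]
  · rintro rfl
    exact h.2 ((hν.symm.trans hμ).eq_of_compl hcompl)

theorem Stable.of_agreesOn_of_dom_of_dom (hμ' : mkt.Stable μ') (hν' : mkt.Stable ν')
    (hξ : mkt.Stable ξ) (hξμ : mkt.Dom ξ μ) (hνξ : mkt.Dom ν ξ)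
    (hμ : μ.AgreesOn μ' C) (hν : ν.AgreesOn ν' C) (hcompl : ν'.AgreesOn μ' Cᶜ)
    {τ : Matching M W} (hτ : τ.AgreesOn ξ C) (hτ_compl : τ.AgreesOn μ' Cᶜ) :
    mkt.Stable τ := by
  refine hξ.of_agreesOn hμ' hτ hτ_compl (fun m w hm hw => ?_) (fun m w hm hw => ?_)
  · apply hν'.not_blocking_of_le
    · rw [← hν.mu hm, hτ.mu hm]
      exact hξ.mRank_le_of_dom hνξ m
    · rw [hcompl.nu hw, hτ_compl.nu hw]
  · apply hμ'.not_blocking_of_le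
    · rw [hτ_compl.mu hm]
    · rw [← hμ.nu hw, hτ.nu hw]
      exact hξμ w

theorem InPi.exposedRotation {ρ : List (W × M)} (hρ : mkt.InPi ρ) (hμ : mkt.Stable μ)
    (hν : mkt.Stable ν) (h : IsElimOf ν μ ρ) : mkt.ExposedRotation μ ρ := by
  obtain ⟨μ', hμ', ν', h', hν', hlt, hgap⟩ := hρ
  have hμμ' : μ.AgreesOn μ' (rotAgents ρ) := h.agreesOn_source h'
  have hνν' : ν.AgreesOn ν' (rotAgents ρ) := h.agreesOn_target h'
  refine ⟨ν, h, hν, hlt.congr h'.agreesOn_compl hνν' hμμ' h.agreesOn_compl, ?_⟩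
  rintro ⟨ξ, hξ, hνξ, hξμ⟩
  have hξ_compl : ξ.AgreesOn μ (rotAgents ρ)ᶜ :=
    hμ.agreesOn_of_dom_of_dom hξ hξμ.1 hνξ.1 h.agreesOn_compl
  have hξ_closed : ξ.Closed (rotAgents ρ) := h.closed_source.congr_compl hξ_compl
  have hτ := splice_agreesOn hξ_closed h'.closed_source
  have hτ_compl := splice_agreesOn_compl hξ_closed h'.closed_source
  refine hgap ⟨splice hξ_closed h'.closed_source, ?_, ?_, ?_⟩
  · exact hμ'.of_agreesOn_of_dom_of_dom hν' hξ hξμ.1 hνξ.1 hμμ' hνν' h'.agreesOn_compl hτ hτ_compl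
  · exact hνξ.congr (h.agreesOn_compl.trans hξ_compl.symm) hνν'.symm hτ
      (h'.agreesOn_compl.trans hτ_compl.symm)
  · exact hξμ.congr hξ_compl hτ hμμ'.symm hτ_compl

variable {μ₀ μ₁ μ₂ : Matching M W} {ρ₀ ρ₁ : List (W × M)}

theorem disjoint_rotAgents_of_not_type1Pred (he₀ : IsElimOf μ₁ μ₀ ρ₀) (he₁ : IsElimOf μ₂ μ₁ ρ₁)
    (h : ¬ mkt.Type1Pred ρ₀ ρ₁) : Disjoint (rotAgents ρ₀) (rotAgents ρ₁) := by
  have hmen : ∀ m, Sum.inl m ∈ rotAgents ρ₀ → Sum.inl m ∉ rotAgents ρ₁ := by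
    intro m hm₀ hm₁
    obtain ⟨w, w', hmove₀⟩ := exists_movesManFromTo hm₀
    obtain ⟨w₁, w₂, hmove₁⟩ := exists_movesManFromTo hm₁
    obtain rfl : w' = w₁ :=
      Option.some.inj ((he₀.mu_of_moves hmove₀).2.symm.trans (he₁.mu_of_moves hmove₁).1)
    exact h ⟨w', m, ⟨w, hmove₀⟩, hmove₁.mem⟩
  rw [Set.disjoint_left]
  rintro (m | w) h₀ h₁
  · exact hmen m h₀ h₁
  · obtain ⟨m, m', hmove⟩ := exists_movesWomanFromTo h₁
    have hmw : μ₁.mu m = some w := (μ₁.consistent m w).2 (he₁.nu_of_moves hmove).1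
    exact hmen m ((he₀.closed_target hmw).2 h₀) hmove.source_mem_rotAgents

theorem type2Pred_of_rank_lt (h₀ : mkt.Stable μ₀) (h₂ : mkt.Stable μ₂)
    (he₀ : IsElimOf μ₁ μ₀ ρ₀) (he₁ : IsElimOf μ₂ μ₁ ρ₁)
    (hdisj : Disjoint (rotAgents ρ₀) (rotAgents ρ₁))
    (hm : Sum.inl m ∈ rotAgents ρ₁) (hw : Sum.inr w ∈ rotAgents ρ₀)
    (hm_lt : mkt.mRank m (μ₂.mu m) < mkt.mRank m (some w))
    (hw_lt : mkt.wRank w (μ₀.nu w) < mkt.wRank w (some m)) : mkt.Type2Pred ρ₀ ρ₁ := by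
  obtain ⟨mlo, mhi, hmove_w⟩ := exists_movesWomanFromTo hw
  obtain ⟨whi, wlo, hmove_m⟩ := exists_movesManFromTo hm
  obtain ⟨hμ₀w, hμ₁w⟩ := he₀.nu_of_moves hmove_w
  obtain ⟨hμ₁m, hμ₂m⟩ := he₁.mu_of_moves hmove_m
  have hμ₂w : μ₂.nu w = some mhi :=
    (he₁.agreesOn_compl.nu (hdisj.notMem_of_mem_left hw)).trans hμ₁w
  have hμ₀m : μ₀.mu m = some whi :=
    (he₀.agreesOn_compl.mu (hdisj.notMem_of_mem_right hm)).symm.trans hμ₁m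
  have hm_ne : some m ≠ some mhi := by
    rintro ⟨⟩
    exact hdisj.notMem_of_mem_left hmove_w.target_mem_rotAgents hm
  have hw_ne : some w ≠ some whi := by
    rintro ⟨⟩
    exact hdisj.notMem_of_mem_left hw hmove_m.source_mem_rotAgents
  refine ⟨m, w, mlo, mhi, whi, wlo, hmove_w, hμ₀w ▸ hw_lt, ?_, hmove_m, hμ₂m ▸ hm_lt, ?_⟩
  · exact (hμ₂w ▸ h₂.wRank_le_of_mRank_lt hm_lt).lt_of_ne ((mkt.wRank_inj w).ne hm_ne)
  · exact (hμ₀m ▸ h₀.mRank_le_of_wRank_lt hw_lt).lt_of_ne ((mkt.mRank_inj m).ne hw_ne)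

theorem Stable.of_not_type2Pred (h₀ : mkt.Stable μ₀) (h₂ : mkt.Stable μ₂)
    (hdom : mkt.Dom μ₂ μ₀) (he₀ : IsElimOf μ₁ μ₀ ρ₀) (he₁ : IsElimOf μ₂ μ₁ ρ₁)
    (hdisj : Disjoint (rotAgents ρ₀) (rotAgents ρ₁)) (h : ¬ mkt.Type2Pred ρ₀ ρ₁)
    (hν : IsElimOf ν μ₀ ρ₁) : mkt.Stable ν := by
  have hνμ₂ : ν.AgreesOn μ₂ (rotAgents ρ₁) := hν.agreesOn_target he₁
  refine h₂.of_agreesOn h₀ hνμ₂ hν.agreesOn_compl (fun m w hm hw => ?_) (fun m w hm hw => ?_)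
  · by_cases hw₀ : Sum.inr w ∈ rotAgents ρ₀
    · rw [blocking_iff, hνμ₂.mu hm, hν.agreesOn_compl.nu hw]
      rintro ⟨hm_lt, hw_lt⟩
      exact h (type2Pred_of_rank_lt h₀ h₂ he₀ he₁ hdisj hm hw₀ hm_lt hw_lt)
    · apply h₂.not_blocking_of_le
      · rw [hνμ₂.mu hm]
      · rw [hν.agreesOn_compl.nu hw, he₁.agreesOn_compl.nu hw, he₀.agreesOn_compl.nu hw₀]
  · apply h₀.not_blocking_of_le
    · rw [hν.agreesOn_compl.mu hm]
    · rw [hνμ₂.nu hw]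
      exact hdom w

end Market

theorem interchange_lemma_general (mkt : Market M W) (μ0 μ1 μ2 : Matching M W)
    (h0 : mkt.Stable μ0) (h1 : mkt.Stable μ1) (h2 : mkt.Stable μ2)
    (hc1 : mkt.Covers μ1 μ0) (hc2 : mkt.Covers μ2 μ1)
    (ρ0 ρ1 : List (W × M))
    (he0 : Matching.IsElimOf μ1 μ0 ρ0) (he1 : Matching.IsElimOf μ2 μ1 ρ1)
    (hnp : ¬ mkt.Pred ρ0 ρ1) :
    mkt.ExposedRotation μ0 ρ1 ∧
    ∀ μ1' : Matching M W, Matching.IsElimOf μ1' μ0 ρ1 →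
      mkt.ExposedRotation μ1' ρ0 ∧ Matching.IsElimOf μ2 μ1' ρ0 := by
  have hdisj : Disjoint (rotAgents ρ0) (rotAgents ρ1) :=
    Market.disjoint_rotAgents_of_not_type1Pred he0 he1 fun h => hnp (.inl h)
  obtain ⟨ν, hν, hμ2⟩ := he0.exists_comm he1 hdisj
  have hν_stable : mkt.Stable ν :=
    h0.of_not_type2Pred h2 (hc2.1.1.trans hc1.1.1) he0 he1 hdisj (fun h => hnp (.inr h)) hν
  have hρ0 : mkt.InPi ρ0 := ⟨μ0, h0, μ1, he0, h1, hc1⟩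
  have hρ1 : mkt.InPi ρ1 := ⟨μ1, h1, μ2, he1, h2, hc2⟩
  refine ⟨hρ1.exposedRotation h0 hν_stable hν, fun μ1' hμ1' => ?_⟩
  obtain rfl : μ1' = ν := hμ1'.unique hν
  exact ⟨hρ0.exposedRotation hν_stable h2 hμ2, hμ2⟩

/-- interchange lemma: let `μ0 < μ1 < μ2` be stable matchings
with `μ1` covering `μ0` and `μ2` covering `μ1`, with rotations `ρ0, ρ1`
(`μ1` the elimination of `ρ0` from `μ0`, `μ2` of `ρ1` from `μ1`). If `ρ0` is
not a predecessor of `ρ1`, then `ρ1` is exposed in `μ0`; moreover, for `μ1'`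
the elimination of `ρ1` from `μ0`, the rotation `ρ0` is exposed in `μ1'` and
`μ2` is the elimination of `ρ0` from `μ1'`. -/
theorem interchange_lemma {M W : Type*} [Fintype M] [Fintype W]
    (mkt : Market M W) (μ0 μ1 μ2 : Matching M W)
    (h0 : mkt.Stable μ0) (h1 : mkt.Stable μ1) (h2 : mkt.Stable μ2)
    (hc1 : mkt.Covers μ1 μ0) (hc2 : mkt.Covers μ2 μ1)
    (ρ0 ρ1 : List (W × M))
    (he0 : Matching.IsElimOf μ1 μ0 ρ0) (he1 : Matching.IsElimOf μ2 μ1 ρ1)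
    (hnp : ¬ mkt.Pred ρ0 ρ1) :
    mkt.ExposedRotation μ0 ρ1 ∧
    ∀ μ1' : Matching M W, Matching.IsElimOf μ1' μ0 ρ1 →
      mkt.ExposedRotation μ1' ρ0 ∧ Matching.IsElimOf μ2 μ1' ρ0 :=
  interchange_lemma_general mkt μ0 μ1 μ2 h0 h1 h2 hc1 hc2 ρ0 ρ1 he0 he1 hnp
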